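/- arXiv:math-ph/0306059 — 2 statements merged into one kernel-verified Lean document; each statement's English description precedes it below -/
import Mathlib

section
/- Let n ≥ 1 and r ≥ 1, and let g, g' : Fin r → O(n). If for every word w ∈ FreeGroup(Fin r) the elements w(g) and w(g') are conjugate in O(n), then g and g' are diagonally conjugate, i.e. there exists k ∈ O(n) such that g'(i) = k · g(i) · k⁻¹ for all i. (This includes the case of even orthogonal groups O(2m).) -/
/-!
Conjugate matrices have equal traces, so `g` and `g'` define two orthogonal representations of the
free group with the same character. Orthogonal complements of invariant subspaces are invariant, so
both representations are semisimple. For semisimple modules in characteristic zero the character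
determines the module: if there were no nonzero map `M → N`, the projection of `M × N` onto `M`
would commute with all endomorphisms, hence by Jacobson density some element of the algebra would
act as `1` on `M` and as `0` on `N`, and its traces would differ; so there is a nonzero map, and one
splits off its image and inducts on the dimension. Finally, an invertible intertwiner `t` between
unitary representations has a polar decomposition `t = w |t|` in which `|t|` commutes with the first
representation, so its unitary part `w` intertwines them as well.
-/

section Semisimple

open LinearMap Module

variable {R M N : Type*} [Ring R] [AddCommGroup M] [Module R M] [AddCommGroup N] [Module R N]
  [IsSemisimpleModule R M] [IsSemisimpleModule R N]

lemma isSemisimpleModule_prod : IsSemisimpleModule R (M × N) := by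
  have hM : IsSemisimpleModule R (range (inl R M N)) := .range _
  have hN : IsSemisimpleModule R (range (inr R M N)) := .range _
  have hsup := IsSemisimpleModule.sup hM hN
  rwa [sup_range_inl_inr, Submodule.topEquiv.isSemisimpleModule_iff] at hsup

lemma subsingleton_linearMap_symm (h : Subsingleton (M →ₗ[R] N)) :
    Subsingleton (N →ₗ[R] M) := by
  refine subsingleton_of_forall_eq 0 fun f => ?_
  obtain ⟨s, hs⟩ := IsSemisimpleModule.lifting_property f.rangeRestrict
    f.surjective_rangeRestrict .id
  obtain ⟨t, ht⟩ := IsSemisimpleModule.extension_property (range f).subtype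
    (range f).subtype_injective s
  have hs0 : s = 0 := by rw [← ht, Subsingleton.elim t 0, zero_comp]
  ext x
  simpa [hs0] using congr(($hs (f.rangeRestrict x) : M)).symm

lemma commute_inl_comp_fst (h : Subsingleton (M →ₗ[R] N)) (f : End R (M × N)) :
    Commute f (inl R M N ∘ₗ fst R M N) := by
  have := subsingleton_linearMap_symm h
  have hMN : snd R M N ∘ₗ f ∘ₗ inl R M N = 0 := Subsingleton.elim _ _
  have hNM : fst R M N ∘ₗ f ∘ₗ inr R M N = 0 := Subsingleton.elim _ _
  refine prod_ext (LinearMap.ext fun m => ?_) (LinearMap.ext fun n => ?_)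
  · exact Prod.ext rfl congr($hMN m)
  · have hf : f (0, 0) = 0 := map_zero f
    exact Prod.ext (by simpa [hf] using congr($hNM n).symm) (by simp [hf])

lemma exists_smul_eq_self_and_smul_eq_zero [Module.Finite (End R (M × N)) (M × N)]
    (h : Subsingleton (M →ₗ[R] N)) :
    ∃ a : R, (∀ m : M, a • m = m) ∧ ∀ n : N, a • n = 0 := by
  have := isSemisimpleModule_prod (R := R) (M := M) (N := N)
  let π : End (End R (M × N)) (M × N) :=
    { (inl R M N ∘ₗ fst R M N).toAddMonoidHom with
      map_smul' := fun f x => congr($(commute_inl_comp_fst h f) x).symm }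
  obtain ⟨a, ha⟩ := Module.Finite.toModuleEnd_moduleEnd_surjective (R := R) π
  exact ⟨a, fun m => congr(($ha (m, 0)).1), fun n => congr(($ha (0, n)).2)⟩

end Semisimple

section ModuleCharacter

open LinearMap Module

variable (k A M : Type*) {N : Type*} [Field k] [Ring A] [Algebra k A]
  [AddCommGroup M] [Module k M] [Module A M] [IsScalarTower k A M]
  [AddCommGroup N] [Module k N] [Module A N] [IsScalarTower k A N]

/-- The character of a module `M` over a `k`-algebra `A`: the trace of `a : A` acting on `M`. -/
noncomputable def moduleCharacter : A →ₗ[k] k :=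
  trace k M ∘ₗ (Algebra.lsmul k k M).toLinearMap

variable {k A M}

lemma moduleCharacter_apply_of_forall_smul_eq_zero {a : A} (h : ∀ m : M, a • m = 0) :
    moduleCharacter k A M a = 0 :=
  (congrArg (trace k M) (LinearMap.ext h)).trans (map_zero _)

lemma moduleCharacter_congr (e : M ≃ₗ[A] N) :
    moduleCharacter k A M = moduleCharacter k A N := by
  ext a
  have h : (e.restrictScalars k).conj (Algebra.lsmul k k M a) = Algebra.lsmul k k N a := by
    ext x
    simp [LinearEquiv.conj_apply]
  exact (trace_conj' _ (e.restrictScalars k)).symm.trans congr(trace k N $h)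

variable [FiniteDimensional k M]

lemma moduleCharacter_apply_of_forall_smul_eq_self {a : A} (h : ∀ m : M, a • m = m) :
    moduleCharacter k A M a = finrank k M :=
  (congrArg (trace k M) (LinearMap.ext h)).trans (trace_id k M)

instance finiteDimensional_of_submodule (p : Submodule A M) : FiniteDimensional k p :=
  inferInstanceAs (FiniteDimensional k (p.restrictScalars k))

lemma moduleCharacter_prod [FiniteDimensional k N] :
    moduleCharacter k A (M × N) = moduleCharacter k A M + moduleCharacter k A N := by
  ext a
  exact trace_prodMap' (Algebra.lsmul k k M a) (Algebra.lsmul k k N a)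

lemma moduleCharacter_eq_add_of_isCompl {p q : Submodule A M} (h : IsCompl p q) :
    moduleCharacter k A M = moduleCharacter k A p + moduleCharacter k A q := by
  rw [← moduleCharacter_congr (Submodule.prodEquivOfIsCompl p q h), moduleCharacter_prod]

variable [FiniteDimensional k N] [CharZero k]

lemma finrank_eq_of_moduleCharacter_eq
    (h : moduleCharacter k A M = moduleCharacter k A N) : finrank k M = finrank k N := by
  have hone := congr($h 1)
  rwa [moduleCharacter_apply_of_forall_smul_eq_self (one_smul A),
    moduleCharacter_apply_of_forall_smul_eq_self (one_smul A), Nat.cast_inj] at hone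

variable [IsSemisimpleModule A M] [IsSemisimpleModule A N]

lemma nontrivial_linearMap_of_moduleCharacter_eq [Nontrivial M]
    (h : moduleCharacter k A M = moduleCharacter k A N) : Nontrivial (M →ₗ[A] N) := by
  by_contra! hMN
  have : Module.Finite (End A (M × N)) (M × N) := .of_restrictScalars_finite k _ _
  obtain ⟨a, haM, haN⟩ := exists_smul_eq_self_and_smul_eq_zero hMN
  have ha := congr($h a)
  rw [moduleCharacter_apply_of_forall_smul_eq_self haM,
    moduleCharacter_apply_of_forall_smul_eq_zero haN, Nat.cast_eq_zero] at ha
  exact finrank_pos.ne' ha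

theorem nonempty_linearEquiv_of_moduleCharacter_eq
    (h : moduleCharacter k A M = moduleCharacter k A N) : Nonempty (M ≃ₗ[A] N) := by
  induction hd : finrank k M using Nat.strong_induction_on generalizing M N with
  | _ d ih
  cases subsingleton_or_nontrivial M with
  | inl hM =>
    have hN : finrank k N = 0 := by
      rw [← finrank_eq_of_moduleCharacter_eq h, finrank_zero_of_subsingleton]
    have := finrank_zero_iff.mp hN
    exact ⟨0⟩
  | inr hM =>
    have := nontrivial_linearMap_of_moduleCharacter_eq h
    obtain ⟨f, hf⟩ := exists_ne (0 : M →ₗ[A] N)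
    obtain ⟨p, hp⟩ := exists_isCompl (ker f)
    obtain ⟨q, hq⟩ := exists_isCompl (range f)
    let e : p ≃ₗ[A] range f := f.kerComplementEquivRange hp.symm
    have hchar : moduleCharacter k A (ker f) = moduleCharacter k A q := by
      rw [moduleCharacter_eq_add_of_isCompl hp, moduleCharacter_eq_add_of_isCompl hq,
        moduleCharacter_congr e, add_comm] at h
      exact add_left_cancel h
    have hlt : finrank k (ker f) < d := by
      rw [← hd]
      refine Submodule.finrank_lt (s := (ker f).restrictScalars k) ?_
      simpa [ker_eq_top] using hf
    obtain ⟨e'⟩ := ih _ hlt hchar rfl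
    exact ⟨(Submodule.prodEquivOfIsCompl _ _ hp).symm ≪≫ₗ LinearEquiv.prodComm .. ≪≫ₗ
      e.prodCongr e' ≪≫ₗ Submodule.prodEquivOfIsCompl _ _ hq⟩

end ModuleCharacter

section Representations

open Representation
open scoped MonoidAlgebra

variable {k G V W : Type*} [Field k] [AddCommGroup V] [Module k V] [AddCommGroup W] [Module k W]

lemma moduleCharacter_asModule_single [Monoid G] (ρ : Representation k G V) (g : G) (t : k) :
    moduleCharacter k k[G] ρ.asModule (.single g t) = t • ρ.character g := by
  have h : Algebra.lsmul k k ρ.asModule (.single g t : k[G]) = t • ρ g :=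
    LinearMap.ext fun v => ρ.single_smul t g v
  exact (congrArg (LinearMap.trace k V) h).trans (map_smul ..)

theorem nonempty_equiv_of_character_eq [Monoid G] [CharZero k] [FiniteDimensional k V]
    [FiniteDimensional k W] {ρ : Representation k G V} {σ : Representation k G W}
    [IsSemisimpleRepresentation ρ] [IsSemisimpleRepresentation σ]
    (h : ρ.character = σ.character) : Nonempty (Representation.Equiv ρ σ) := by
  have := (isSemisimpleRepresentation_iff_isSemisimpleModule_asModule ρ).mp inferInstance
  have := (isSemisimpleRepresentation_iff_isSemisimpleModule_asModule σ).mp inferInstance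
  have hchar : moduleCharacter k k[G] ρ.asModule = moduleCharacter k k[G] σ.asModule :=
    MonoidAlgebra.lhom_ext' fun g => LinearMap.ext fun t => by
      simp [moduleCharacter_asModule_single, h]
  obtain ⟨e⟩ := nonempty_linearEquiv_of_moduleCharacter_eq hchar
  let f := (IntertwiningMap.equivLinearMapAsModule ρ σ).symm e
  exact ⟨.mk (.ofBijective f.toLinearMap e.bijective) f.isIntertwining'⟩

variable {𝕜 E : Type*} [RCLike 𝕜] [NormedAddCommGroup E] [InnerProductSpace 𝕜 E]
  [FiniteDimensional 𝕜 E]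

lemma isSemisimpleRepresentation_of_inner_map_map [Group G] {ρ : Representation 𝕜 G E}
    (hρ : ∀ g x y, inner 𝕜 (ρ g x) (ρ g y) = inner 𝕜 x y) :
    IsSemisimpleRepresentation ρ where
  exists_isCompl K := by
    have hstable (g : G) ⦃v : E⦄ (hv : v ∈ K.toSubmoduleᗮ) : ρ g v ∈ K.toSubmoduleᗮ := by
      intro x hx
      rw [← hρ g⁻¹, ρ.inv_self_apply]
      exact hv _ (K.apply_mem_toSubmodule g⁻¹ hx)
    refine ⟨⟨K.toSubmoduleᗮ, hstable⟩, disjoint_iff.mpr ?_, codisjoint_iff.mpr ?_⟩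
    · exact Subrepresentation.toSubmodule_injective K.toSubmodule.inf_orthogonal_eq_bot
    · exact Subrepresentation.toSubmodule_injective
        K.toSubmodule.sup_orthogonal_of_hasOrthogonalProjection

end Representations

section PolarDecomposition

variable {A : Type*} [Ring A] [StarRing A] [TopologicalSpace A] [Algebra ℝ A]
  [ContinuousFunctionalCalculus ℝ A IsSelfAdjoint]
  [PartialOrder A] [StarOrderedRing A] [NonnegSpectrumClass ℝ A] [IsTopologicalRing A] [T2Space A]

lemma exists_mem_unitary_forall_semiconjBy {t : A} (ht : IsUnit t) :
    ∃ w ∈ unitary A, ∀ a b, SemiconjBy t a b → SemiconjBy t (star a) (star b) →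
      SemiconjBy w a b := by
  obtain ⟨s, hs⟩ : IsUnit (CFC.abs t) :=
    (CFC.isUnit_sqrt_iff _ (star_mul_self_nonneg t)).mpr (ht.star.mul ht)
  lift t to Aˣ using ht
  have hsq : star t * t = star s * s := by
    ext
    simp [hs, (CFC.abs_nonneg (t : A)).star_eq, CFC.abs_mul_abs]
  refine ⟨t * ↑s⁻¹, (t.mul_inv_mem_unitary s).mpr hsq, fun a b hab hab' => ?_⟩
  have hba : SemiconjBy (star (t : A)) b a := by simpa using hab'.star_star_star
  have hcomm : Commute (s : A) a := hs ▸ Commute.cfcₙ_nnreal (hba.mul_left hab) _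
  exact hab.mul_left hcomm.units_inv_left

end PolarDecomposition

section UnitaryMatrices

open Matrix Representation
open scoped MatrixOrder

variable {𝕜 n G ι : Type*} [RCLike 𝕜] [Fintype n] [DecidableEq n] [Group G]

lemma inner_toEuclideanLin_of_mem_unitaryGroup {U : Matrix n n 𝕜} (hU : U ∈ unitaryGroup n 𝕜)
    (x y : EuclideanSpace 𝕜 n) :
    inner 𝕜 (toEuclideanLin U x) (toEuclideanLin U y) = inner 𝕜 x y := by
  have hU' := Unitary.map_mem (toEuclideanCLM (n := n) (𝕜 := 𝕜)) hU
  simpa only [← coe_toEuclideanCLM_eq_toEuclideanLin] using!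
    ContinuousLinearMap.inner_map_map_of_mem_unitary hU' x y

/-- The unitary representation of `G` on Euclidean space given by a homomorphism to the unitary
group of matrices. -/
noncomputable def euclideanRepresentation (u : G →* unitaryGroup n 𝕜) :
    Representation 𝕜 G (EuclideanSpace 𝕜 n) :=
  (toLpLinAlgEquiv 2).toAlgHom.toMonoidHom.comp ((unitaryGroup n 𝕜).subtype.comp u)

lemma euclideanRepresentation_apply (u : G →* unitaryGroup n 𝕜) (g : G) :
    euclideanRepresentation u g = toEuclideanLin (u g : Matrix n n 𝕜) :=
  rfl

instance isSemisimpleRepresentation_euclideanRepresentation (u : G →* unitaryGroup n 𝕜) :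
    IsSemisimpleRepresentation (euclideanRepresentation u) :=
  isSemisimpleRepresentation_of_inner_map_map fun g x y =>
    inner_toEuclideanLin_of_mem_unitaryGroup (u g).2 x y

lemma character_euclideanRepresentation (u : G →* unitaryGroup n 𝕜) (g : G) :
    (euclideanRepresentation u).character g = trace (u g : Matrix n n 𝕜) := by
  simp [character, euclideanRepresentation_apply, toLpLin_eq_toLin]

theorem exists_forall_eq_conj_of_trace_eq {u v : G →* unitaryGroup n 𝕜}
    (h : ∀ g, trace (u g : Matrix n n 𝕜) = trace (v g : Matrix n n 𝕜)) :
    ∃ k : unitaryGroup n 𝕜, ∀ g, v g = k * u g * k⁻¹ := by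
  have hchar : (euclideanRepresentation u).character = (euclideanRepresentation v).character :=
    funext fun g => by simp only [character_euclideanRepresentation, h]
  obtain ⟨e⟩ := nonempty_equiv_of_character_eq hchar
  let Φ : Matrix n n 𝕜 ≃ₐ[𝕜] Module.End 𝕜 (EuclideanSpace 𝕜 n) := toLpLinAlgEquiv 2
  let t : Matrix n n 𝕜 := Φ.symm e.toLinearMap
  have ht : IsUnit t := .map Φ.symm ((Module.End.isUnit_iff _).mpr e.bijective)
  have htuv (g : G) : SemiconjBy t (u g : Matrix n n 𝕜) (v g) :=
    Φ.injective <| by simpa [t, Module.End.mul_eq_comp] using! e.isIntertwining' g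
  obtain ⟨w, hw, hwuv⟩ := exists_mem_unitary_forall_semiconjBy ht
  refine ⟨⟨w, hw⟩, fun g => eq_mul_inv_of_mul_eq (Subtype.ext ?_)⟩
  refine (hwuv _ _ (htuv g) ?_).eq.symm
  simpa [map_inv, Unitary.coe_inv] using htuv g⁻¹

lemma trace_unitaryGroup_conj {R : Type*} [CommRing R] [StarRing R] (k u : unitaryGroup n R) :
    trace (k * u * k⁻¹ : unitaryGroup n R).1 = trace (u : Matrix n n R) :=
  trace_units_conj (Unitary.toUnits k) u

theorem wilson_words_determine_diagonal_conjugacy_orthogonal_general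
    (g g' : ι → unitaryGroup n 𝕜)
    (h : ∀ w : FreeGroup ι, trace (FreeGroup.lift g w : Matrix n n 𝕜) =
      trace (FreeGroup.lift g' w : Matrix n n 𝕜)) :
    ∃ k : unitaryGroup n 𝕜, ∀ i, g' i = k * g i * k⁻¹ := by
  obtain ⟨k, hk⟩ := exists_forall_eq_conj_of_trace_eq h
  exact ⟨k, fun i => by simpa using hk (.of i)⟩

end UnitaryMatrices

/-- **Wilson loops determine the diagonal conjugacy class in `O(n)`**
(including the even orthogonal groups `O(2m)`).
If `g, g' : Fin r → O(n)` are such that for every word `w` in the free group on `r`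
generators the elements `w(g)` and `w(g')` are conjugate in `O(n)`, then `g` and `g'`
are diagonally conjugate. -/
theorem wilson_words_determine_diagonal_conjugacy_orthogonal
    (n r : ℕ) (hn : 1 ≤ n) (hr : 1 ≤ r)
    (g g' : Fin r → Matrix.orthogonalGroup (Fin n) ℝ)
    (h : ∀ w : FreeGroup (Fin r), ∃ k : Matrix.orthogonalGroup (Fin n) ℝ,
      FreeGroup.lift g' w = k * FreeGroup.lift g w * k⁻¹) :
    ∃ k : Matrix.orthogonalGroup (Fin n) ℝ, ∀ i : Fin r, g' i = k * g i * k⁻¹ := by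
  refine wilson_words_determine_diagonal_conjugacy_orthogonal_general g g' fun w => ?_
  obtain ⟨k, hk⟩ := h w
  rw [hk, trace_unitaryGroup_conj]
end

section
/- Let n ≥ 1 and let Γ = (E, V) be a graph. Let A be the unital ℂ-subalgebra of the algebra of continuous functions O(n)^E → ℂ generated by the Wilson loop functions g ↦ tr(h_l(g)) associated to all loops l in Γ (tr denotes the matrix trace of the natural n×n matrix representation). Then every continuous function f : O(n)^E → ℂ that is invariant under the action of O(n)^V (i.e. f(φ·g) = f(g) for all φ ∈ O(n)^V, g ∈ O(n)^E) lies in the closure of A with respect to the supremum norm. -/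
/-- The source of an oriented edge `(e, ε)` in the graph with source and target maps
`s, t : E → V`: for `ε = true` the edge is traversed forwards, for `ε = false` backwards. -/
def edgeSrc {E V : Type*} (s t : E → V) (x : E × Bool) : V :=
  if x.2 then s x.1 else t x.1

/-- The target of an oriented edge `(e, ε)`. -/
def edgeTgt {E V : Type*} (s t : E → V) (x : E × Bool) : V :=
  if x.2 then t x.1 else s x.1

/-- `l` is a loop based at `v`: a nonempty composable sequence of oriented edges
starting and ending at `v`. -/
def IsLoopAt {E V : Type*} (s t : E → V) (v : V) (l : List (E × Bool)) : Prop :=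
  ∃ hne : l ≠ [], l.Chain' (fun x y => edgeTgt s t x = edgeSrc s t y) ∧
    edgeSrc s t (l.head hne) = v ∧ edgeTgt s t (l.getLast hne) = v

/-- The holonomy of a configuration `g : E → G` along `l = ((e₁,ε₁), …, (e_k,ε_k))`,
namely `g_{e_k}^{ε_k} ⋯ g_{e₁}^{ε₁}`. -/
def holonomy {E G : Type*} [Group G] (g : E → G) (l : List (E × Bool)) : G :=
  (l.reverse.map fun x => if x.2 then g x.1 else (g x.1)⁻¹).prod

/-- The gauge action of `φ : V → G` on a configuration `g : E → G`:
`(φ · g)_e = φ(t(e))⁻¹ * g_e * φ(s(e))`. -/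
def gaugeAct {E V G : Type*} [Group G] (s t : E → V) (φ : V → G) (g : E → G) : E → G :=
  fun e => (φ (t e))⁻¹ * g e * φ (s e)

/-!
Stone–Weierstrass reduces the theorem to separating gauge orbits: the Wilson loops are stable under
conjugation, because reversing a loop inverts its holonomy, and it remains to see that two
configurations `g` and `g'` with the same loop traces are gauge equivalent.

The pairs `(holonomy g l, holonomy g' l)`, for `l` a closed path at a fixed vertex, form a group
with two unitary representations of equal character. These are intertwined by a unitary matrix
over the base field itself, with no detour through `ℂ` in the orthogonal case: in the direct sum,
compare the projections `p` and `q` onto the summands inside the commutant of the algebra `A`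
generated by the group. The equality of characters says `tr (a p) = tr (a q)` for `a ∈ A`. When
`p` is nonzero, this provides a nonzero element `q x p` of the commutant, whose polar part is a
partial isometry from a piece of `p` to a piece of `q`; splitting off these pieces lowers the rank.
Such intertwiners at one base point per component, transported along paths, make up the gauge
transformation.
-/

section Paths

variable {E V : Type*} {s t : E → V}

/-- `IsEdgePath s t u l v` says that `l` is a path from `u` to `v` in the graph with source and
target maps `s` and `t`. Contrary to `IsLoopAt`, the list `l` may be empty, so that the closed
paths at a vertex have a unit for concatenation. -/
def IsEdgePath (s t : E → V) : V → List (E × Bool) → V → Prop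
  | u, [], v => u = v
  | u, x :: l, v => edgeSrc s t x = u ∧ IsEdgePath s t (edgeTgt s t x) l v

/-- The path `l` traversed backwards. -/
def reversePath (l : List (E × Bool)) : List (E × Bool) :=
  l.reverse.map fun x ↦ (x.1, !x.2)

theorem reversePath_cons (x : E × Bool) (l : List (E × Bool)) :
    reversePath (x :: l) = reversePath l ++ [(x.1, !x.2)] := by
  simp [reversePath]

theorem isEdgePath_edge (s t : E → V) (e : E) : IsEdgePath s t (s e) [(e, true)] (t e) :=
  ⟨rfl, rfl⟩

theorem IsEdgePath.append {u v w : V} {l m : List (E × Bool)} (hl : IsEdgePath s t u l v)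
    (hm : IsEdgePath s t v m w) : IsEdgePath s t u (l ++ m) w := by
  induction l generalizing u with
  | nil => exact hl ▸ hm
  | cons x l ih => exact ⟨hl.1, ih hl.2⟩

theorem IsEdgePath.reverse {u v : V} {l : List (E × Bool)} (hl : IsEdgePath s t u l v) :
    IsEdgePath s t v (reversePath l) u := by
  induction l generalizing u with
  | nil => exact Eq.symm hl
  | cons x l ih =>
    have last_edge : IsEdgePath s t (edgeTgt s t x) [(x.1, !x.2)] u := by
      refine ⟨?_, Eq.trans ?_ hl.1⟩ <;> rcases x with ⟨e, _ | _⟩ <;> rfl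
    exact reversePath_cons x l ▸ (ih hl.2).append last_edge

theorem isEdgePath_cons_iff {u v : V} {x : E × Bool} {l : List (E × Bool)} :
    IsEdgePath s t u (x :: l) v ↔
      (x :: l).IsChain (fun y z ↦ edgeTgt s t y = edgeSrc s t z) ∧ edgeSrc s t x = u ∧
        edgeTgt s t ((x :: l).getLast (List.cons_ne_nil x l)) = v := by
  induction l generalizing u x with
  | nil => simp [IsEdgePath]
  | cons y l ih =>
    rw [IsEdgePath, ih, List.isChain_cons_cons, List.getLast_cons_cons]
    grind

theorem isLoopAt_iff {v : V} {l : List (E × Bool)} :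
    IsLoopAt s t v l ↔ l ≠ [] ∧ IsEdgePath s t v l v := by
  cases l with
  | nil => simp [IsLoopAt]
  | cons x l => exact exists_prop.trans (and_congr_right' isEdgePath_cons_iff.symm)

theorem IsLoopAt.reverse {v : V} {l : List (E × Bool)} (hl : IsLoopAt s t v l) :
    IsLoopAt s t v (reversePath l) := by
  rw [isLoopAt_iff] at hl ⊢
  exact ⟨by simpa [reversePath] using hl.1, hl.2.reverse⟩

theorem exists_basepoint (s t : E → V) :
    ∃ b : V → V, (∀ e, b (s e) = b (t e)) ∧ ∀ v, ∃ l, IsEdgePath s t (b v) l v := by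
  let component : Setoid V :=
    { r := fun u v ↦ ∃ l, IsEdgePath s t u l v
      iseqv := ⟨fun _ ↦ ⟨[], rfl⟩, fun ⟨_, hl⟩ ↦ ⟨_, hl.reverse⟩,
        fun ⟨_, hl⟩ ⟨_, hm⟩ ↦ ⟨_, hl.append hm⟩⟩ }
  refine ⟨fun v ↦ (Quotient.mk component v).out, fun e ↦ ?_, Quotient.mk_out (s := component)⟩
  exact congrArg Quotient.out (Quotient.sound (s := component) ⟨_, isEdgePath_edge s t e⟩)

end Paths

section Holonomy

variable {E V G : Type*} [Group G] {s t : E → V}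

theorem holonomy_nil (g : E → G) : holonomy g [] = 1 := rfl

theorem holonomy_append (g : E → G) (l m : List (E × Bool)) :
    holonomy g (l ++ m) = holonomy g m * holonomy g l := by
  simp [holonomy]

theorem holonomy_cons (g : E → G) (x : E × Bool) (l : List (E × Bool)) :
    holonomy g (x :: l) = holonomy g l * if x.2 then g x.1 else (g x.1)⁻¹ := by
  simp [holonomy]

theorem holonomy_edge (g : E → G) (e : E) : holonomy g [(e, true)] = g e := by
  simp [holonomy]

theorem holonomy_reversePath (g : E → G) (l : List (E × Bool)) :
    holonomy g (reversePath l) = (holonomy g l)⁻¹ := by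
  induction l with
  | nil => simp [reversePath, holonomy_nil]
  | cons x l ih =>
    rw [reversePath_cons, holonomy_append, ih, holonomy_cons g x, mul_inv_rev]
    rcases x with ⟨e, _ | _⟩ <;> simp [holonomy]

theorem map_holonomy {H : Type*} [Group H] (f : G →* H) (g : E → G) (l : List (E × Bool)) :
    f (holonomy g l) = holonomy (fun e ↦ f (g e)) l := by
  induction l with
  | nil => simp [holonomy_nil]
  | cons x l ih => simp [holonomy_cons, ih, apply_ite f]

/-- The holonomy group at `v` of the configuration `g`. -/
def holonomyGroup (s t : E → V) (g : E → G) (v : V) : Subgroup G where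
  carrier := {h | ∃ l, IsEdgePath s t v l v ∧ holonomy g l = h}
  one_mem' := ⟨[], rfl, holonomy_nil g⟩
  mul_mem' := by
    rintro _ _ ⟨l, hl, rfl⟩ ⟨m, hm, rfl⟩
    exact ⟨m ++ l, hm.append hl, holonomy_append g m l⟩
  inv_mem' := by
    rintro _ ⟨l, hl, rfl⟩
    exact ⟨reversePath l, hl.reverse, holonomy_reversePath g l⟩

theorem exists_gaugeAct_eq_of_holonomy_conj {g g' : E → G}
    (h : ∀ v, ∃ U : G, ∀ l, IsEdgePath s t v l v → holonomy g' l * U = U * holonomy g l) :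
    ∃ φ : V → G, gaugeAct s t φ g = g' := by
  choose U hU using h
  obtain ⟨b, hb, hpath⟩ := exists_basepoint s t
  choose p hp using hpath
  refine ⟨fun v ↦ holonomy g (p v) * (U (b v))⁻¹ * (holonomy g' (p v))⁻¹, funext fun e ↦ ?_⟩
  have closed : IsEdgePath s t (b (t e)) (p (s e) ++ [(e, true)] ++ reversePath (p (t e)))
      (b (t e)) :=
    ((hb e ▸ hp (s e)).append (isEdgePath_edge s t e)).append (hp (t e)).reverse
  have conj := hU _ _ closed
  simp only [holonomy_append, holonomy_reversePath, holonomy_edge, ← mul_assoc] at conj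
  calc
    gaugeAct s t _ g e = holonomy g' (p (t e)) * (U (b (t e)) * (holonomy g (p (t e)))⁻¹ * g e *
        holonomy g (p (s e))) * (U (b (t e)))⁻¹ * (holonomy g' (p (s e)))⁻¹ := by
      simp only [gaugeAct, hb e]
      group
    _ = g' e := by
      rw [← conj]
      group

end Holonomy

open Matrix
open scoped ComplexOrder MatrixOrder

section Matrices

variable {𝕜 m n : Type*} [RCLike 𝕜] [Fintype m] [Fintype n]

theorem sum_mul_single_mul_apply {R : Type*} [Semiring R] [DecidableEq m] [DecidableEq n]
    (A : Matrix m m R) (B : Matrix n n R) :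
    ∑ k : m, ∑ l : n, (A * single k l (1 : R) * B) k l = trace A * trace B := by
  have entry (k : m) (l : n) : (A * single k l (1 : R) * B) k l = A k k * B l l := by
    rw [mul_apply, Finset.sum_eq_single l]
    · simp
    · intro j _ hj
      simp [mul_single_apply_of_ne, hj]
    · simp
  simp only [entry, trace, diag_apply, Finset.sum_mul_sum]

theorem exists_sum_trace_smul_eq_self (K : Submodule 𝕜 (Matrix n n 𝕜)) :
    ∃ (d : ℕ) (b : Fin d → Matrix n n 𝕜), (∀ i, b i ∈ K) ∧
      ∀ x ∈ K, ∑ i, trace ((b i)ᴴ * x) • b i = x := by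
  classical
  let _ := toMatrixNormedAddCommGroup (1 : Matrix n n 𝕜) .one
  let _ := toMatrixInnerProductSpace (1 : Matrix n n 𝕜) .one
  let b := stdOrthonormalBasis 𝕜 K
  refine ⟨_, fun i ↦ b i, fun i ↦ (b i).2, fun x hx ↦ ?_⟩
  have inner_eq (y z : Matrix n n 𝕜) : inner 𝕜 y z = trace (yᴴ * z) :=
    calc
      inner 𝕜 y z = trace (z * 1 * yᴴ) := rfl
      _ = trace (yᴴ * z) := by rw [Matrix.mul_one, trace_mul_comm]
  simpa [inner_eq] using congrArg Subtype.val (b.sum_repr' ⟨x, hx⟩)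

theorem trace_eq_rank_of_isIdempotentElem {K : Type*} [Field K] {p : Matrix n n K}
    (hp : IsIdempotentElem p) : trace p = (p.rank : K) := by
  classical
  have idem : IsIdempotentElem (toLin' p) := hp.map toLinAlgEquiv'
  rw [← trace_toLin'_eq, (LinearMap.IsIdempotentElem.isProj_range _ idem).trace]
  rfl

theorem eq_zero_of_isIdempotentElem_of_trace_eq_zero {K : Type*} [Field K] [CharZero K]
    {p : Matrix n n K} (hp : IsIdempotentElem p) (htr : trace p = 0) : p = 0 := by
  classical
  have idem : IsIdempotentElem (toLin' p) := hp.map toLinAlgEquiv'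
  rw [← trace_toLin'_eq] at htr
  exact toLin'.map_eq_zero_iff.1 (LinearMap.IsIdempotentElem.eq_zero_of_trace_eq_zero idem htr)

theorem mul_eq_self_of_mul_star_self_eq {q u : Matrix n n 𝕜} (hq : IsIdempotentElem q)
    (hu : u * star u = q) : q * u = u := by
  classical
  have : (1 - q) * u = 0 := (mul_self_mul_conjTranspose_eq_zero _ _).1 <| by
    rw [← star_eq_conjTranspose, hu, hq.one_sub_mul_self]
  rw [Matrix.sub_mul, Matrix.one_mul, sub_eq_zero] at this
  exact this.symm

theorem isStarProjection_fromBlocks_diagonal {R : Type*} [NonUnitalNonAssocSemiring R] [StarRing R]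
    {p : Matrix m m R} {q : Matrix n n R} (hp : IsStarProjection p) (hq : IsStarProjection q) :
    IsStarProjection (fromBlocks p 0 0 q) where
  isIdempotentElem := by
    simp [IsIdempotentElem, fromBlocks_multiply, hp.isIdempotentElem.eq, hq.isIdempotentElem.eq]
  isSelfAdjoint := by
    simp [IsSelfAdjoint, star_eq_conjTranspose, fromBlocks_conjTranspose,
      ← star_eq_conjTranspose p, ← star_eq_conjTranspose q, hp.isSelfAdjoint.star_eq,
      hq.isSelfAdjoint.star_eq]

-- `F` is the inverse square root of `S` on its range and `0` on its kernel, as `(√0)⁻¹ = 0`.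
theorem exists_commuting_rsqrt {S : Matrix n n 𝕜} (hS : S.PosSemidef) :
    ∃ F : Matrix n n 𝕜, IsSelfAdjoint F ∧ (∀ a, Commute S a → Commute F a) ∧
      F * F * F * S = F ∧ F * F * S * S = S := by
  classical
  have cfc_mul_cfc (f g : ℝ → ℝ) : cfc f S * cfc g S = cfc (fun x ↦ f x * g x) S :=
    (cfc_mul f g S (finite_real_spectrum.continuousOn f) (finite_real_spectrum.continuousOn g)).symm
  have cfc_id : cfc (fun x : ℝ ↦ x) S = S := cfc_id' ℝ S hS.isHermitian
  have sqrt_mul_sqrt {x : ℝ} (hx : x ∈ spectrum ℝ S) : √x * √x = x :=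
    Real.mul_self_sqrt (spectrum_nonneg_of_nonneg hS.nonneg hx)
  refine ⟨cfc (fun x : ℝ ↦ (√x)⁻¹) S, cfc_predicate _ S,
    fun a ha ↦ IsSelfAdjoint.commute_cfc hS.isHermitian ha _, ?_, ?_⟩
  · calc
      _ = cfc (fun x : ℝ ↦ (√x)⁻¹ * (√x)⁻¹ * (√x)⁻¹ * x) S := by
        rw [← cfc_mul_cfc, ← cfc_mul_cfc, ← cfc_mul_cfc, cfc_id]
      _ = cfc (fun x : ℝ ↦ (√x)⁻¹) S := cfc_congr fun x hx ↦ by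
        rcases eq_or_ne (√x) 0 with h | h
        · simp [h]
        · nth_rw 4 [← sqrt_mul_sqrt hx]
          field_simp
  · calc
      _ = cfc (fun x : ℝ ↦ (√x)⁻¹ * (√x)⁻¹ * x * x) S := by
        rw [← cfc_mul_cfc, ← cfc_mul_cfc, ← cfc_mul_cfc, cfc_id]
      _ = cfc (fun x : ℝ ↦ x) S := cfc_congr fun x hx ↦ by
        rcases eq_or_ne (√x) 0 with h | h
        · have : x = 0 := by rw [← sqrt_mul_sqrt hx, h, mul_zero]
          simp [this]
        · nth_rw 3 [← sqrt_mul_sqrt hx]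
          field_simp
      _ = S := cfc_id

theorem rank_sub_lt_of_isIdempotentElem {K : Type*} [Field K] [CharZero K] {e p : Matrix n n K}
    (he : IsIdempotentElem e) (hp : IsIdempotentElem p) (hpe : IsIdempotentElem (p - e))
    (he₀ : e ≠ 0) : (p - e).rank < p.rank := by
  have rank_pos : 0 < e.rank := Nat.pos_of_ne_zero fun h ↦ he₀ <|
    eq_zero_of_isIdempotentElem_of_trace_eq_zero he <| by
      rw [trace_eq_rank_of_isIdempotentElem he, h, Nat.cast_zero]
  have rank_add : (p - e).rank + e.rank = p.rank := by
    rw [← Nat.cast_inj (R := K), Nat.cast_add, ← trace_eq_rank_of_isIdempotentElem he,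
      ← trace_eq_rank_of_isIdempotentElem hp, ← trace_eq_rank_of_isIdempotentElem hpe, trace_sub,
      sub_add_cancel]
  lia

theorem isStarProjection_of_mul_star_mul_self {R : Type*} [Semigroup R] [StarMul R] {v : R}
    (hv : v * star v * v = v) : IsStarProjection (star v * v) ∧ IsStarProjection (v * star v) :=
  ⟨⟨by rw [IsIdempotentElem, mul_assoc, ← mul_assoc v, hv], .star_mul_self v⟩,
    ⟨by rw [IsIdempotentElem, ← mul_assoc, hv], .mul_star_self v⟩⟩

end Matrices

section Commutant

variable {𝕜 n : Type*} [RCLike 𝕜] [Fintype n] [DecidableEq n]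
  {A : StarSubalgebra 𝕜 (Matrix n n 𝕜)}

theorem mem_centralizer_starSubalgebra_iff {R B : Type*} [CommSemiring R] [StarRing R]
    [Semiring B] [StarRing B] [Algebra R B] [StarModule R B] {A : StarSubalgebra R B} {z : B} :
    z ∈ StarSubalgebra.centralizer R (A : Set B) ↔ ∀ a ∈ A, a * z = z * a := by
  rw [StarSubalgebra.mem_centralizer_iff]
  exact ⟨fun h a ha ↦ (h a ha).1, fun h a ha ↦ ⟨h a ha, h _ (star_mem ha)⟩⟩

-- The Casimir element of the trace form on `A` plays the role of averaging over a compact group.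
theorem sum_mul_mul_conjTranspose_mem_centralizer {ι : Type*} [Fintype ι] {b : ι → Matrix n n 𝕜}
    (hbA : ∀ i, b i ∈ A) (hb : ∀ x ∈ A, ∑ i, trace ((b i)ᴴ * x) • b i = x) (x : Matrix n n 𝕜) :
    ∑ i, b i * x * (b i)ᴴ ∈ StarSubalgebra.centralizer 𝕜 (A : Set (Matrix n n 𝕜)) := by
  refine mem_centralizer_starSubalgebra_iff.2 fun a ha ↦ ?_
  obtain ⟨c, left, right⟩ : ∃ c : ι → ι → 𝕜,
      (∀ i, a * b i = ∑ j, c j i • b j) ∧ ∀ j, (b j)ᴴ * a = ∑ i, c j i • (b i)ᴴ := by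
    refine ⟨fun j i ↦ trace ((b j)ᴴ * a * b i), fun i ↦ ?_, fun j ↦ ?_⟩
    · simpa [Matrix.mul_assoc] using (hb _ (mul_mem ha (hbA i))).symm
    · have := congrArg conjTranspose (hb _ (mul_mem (star_mem ha) (hbA j)))
      simpa [star_eq_conjTranspose, conjTranspose_sum, ← trace_conjTranspose,
        ← Matrix.mul_assoc] using this.symm
  calc
    a * ∑ i, b i * x * (b i)ᴴ = ∑ i, ∑ j, c j i • (b j * x * (b i)ᴴ) := by
      simp only [Finset.mul_sum, ← Matrix.mul_assoc, left, Finset.sum_mul, Matrix.smul_mul]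
    _ = ∑ j, ∑ i, c j i • (b j * x * (b i)ᴴ) := Finset.sum_comm
    _ = (∑ j, b j * x * (b j)ᴴ) * a := by
      simp only [Finset.sum_mul, Matrix.mul_assoc, right, Finset.mul_sum, Matrix.mul_smul]

-- If `q * x * p = 0` for the Casimir average `x` of every matrix unit, then summing entries gives
-- `∑ i, |tr (b i * p)| ^ 2 = 0`; expanding `1` in the `b i`, the projection `p` has trace zero.
theorem exists_mem_centralizer_mul_mul_ne_zero {p q : Matrix n n 𝕜} (hp : IsStarProjection p)
    (hp₀ : p ≠ 0) (htr : ∀ a ∈ A, trace (a * p) = trace (a * q)) :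
    ∃ x ∈ StarSubalgebra.centralizer 𝕜 (A : Set (Matrix n n 𝕜)), q * x * p ≠ 0 := by
  by_contra! hzero
  obtain ⟨d, b, hbA, hb⟩ := exists_sum_trace_smul_eq_self (Subalgebra.toSubmodule A.toSubalgebra)
  have sum_trace : ∑ i, trace (q * b i) * trace ((b i)ᴴ * p) = 0 := by
    have entry_zero (k l : n) : ∑ i, (q * b i * single k l (1 : 𝕜) * ((b i)ᴴ * p)) k l = 0 := by
      have := hzero _ (sum_mul_mul_conjTranspose_mem_centralizer hbA hb (single k l 1))
      simpa [Finset.mul_sum, Finset.sum_mul, Matrix.sum_apply, Matrix.mul_assoc]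
        using congr($this k l)
    calc
      _ = ∑ i, ∑ k : n, ∑ l : n, (q * b i * single k l (1 : 𝕜) * ((b i)ᴴ * p)) k l := by
        simp only [sum_mul_single_mul_apply]
      _ = ∑ k : n, ∑ l : n, ∑ i, (q * b i * single k l (1 : 𝕜) * ((b i)ᴴ * p)) k l :=
        Finset.sum_comm.trans (Finset.sum_congr rfl fun _ _ ↦ Finset.sum_comm)
      _ = 0 := by simp [entry_zero]
  have trace_zero (i : Fin d) : trace (b i * p) = 0 := by
    have term (i : Fin d) :
        trace (q * b i) * trace ((b i)ᴴ * p) = (‖trace (b i * p)‖ ^ 2 : ℝ) := by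
      have conj_trace : trace ((b i)ᴴ * p) = star (trace (b i * p)) := by
        rw [← trace_conjTranspose, conjTranspose_mul, trace_mul_comm, ← star_eq_conjTranspose p,
          hp.isSelfAdjoint.star_eq]
      rw [trace_mul_comm q, ← htr _ (hbA i), conj_trace, RCLike.star_def, RCLike.mul_conj]
      simp
    simp only [term] at sum_trace
    norm_cast at sum_trace
    simpa using (Finset.sum_eq_zero_iff_of_nonneg fun _ _ ↦ by positivity).1 sum_trace i
  refine hp₀ (eq_zero_of_isIdempotentElem_of_trace_eq_zero hp.isIdempotentElem ?_)
  rw [← Matrix.one_mul p, ← hb 1 (one_mem A)]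
  simp [Finset.sum_mul, trace_sum, trace_zero]

theorem exists_partialIsometry_mem_centralizer {T : Matrix n n 𝕜}
    (hT : T ∈ StarSubalgebra.centralizer 𝕜 (A : Set (Matrix n n 𝕜))) (hT₀ : T ≠ 0) :
    ∃ v ∈ StarSubalgebra.centralizer 𝕜 (A : Set (Matrix n n 𝕜)),
      v ≠ 0 ∧ v * star v * v = v ∧ (∃ x, v = T * x) ∧ ∃ y, v = y * T := by
  obtain ⟨F, F_star, F_comm, hF, hFS⟩ :=
    exists_commuting_rsqrt (posSemidef_conjTranspose_mul_self T)
  rw [← star_eq_conjTranspose] at F_comm hF hFS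
  have F_comm_S : F * (star T * T) = star T * T * F := F_comm _ (Commute.refl _)
  have F_mem : F ∈ StarSubalgebra.centralizer 𝕜 (A : Set (Matrix n n 𝕜)) :=
    mem_centralizer_starSubalgebra_iff.2 fun a ha ↦
      (F_comm a (mem_centralizer_starSubalgebra_iff.1 (mul_mem (star_mem hT) hT) a ha).symm).symm
  refine ⟨T * F, mul_mem hT F_mem, fun h ↦ hT₀ ?_, ?_, ⟨F, rfl⟩, T * F * F * F * star T, ?_⟩
  · have : F * (star T * T) = 0 := by rw [F_comm_S, Matrix.mul_assoc, h, Matrix.mul_zero]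
    rwa [Matrix.mul_assoc F, this, Matrix.mul_zero, Matrix.zero_mul, eq_comm,
      star_eq_conjTranspose, conjTranspose_mul_self_eq_zero] at hFS
  · calc
      T * F * star (T * F) * (T * F) = T * (F * F * (star T * T * F)) := by
        rw [star_mul, F_star.star_eq]
        noncomm_ring
      _ = T * F := by rw [← F_comm_S, ← Matrix.mul_assoc (F * F), hF]
  · calc
      T * F = T * (F * F * F * (star T * T)) := by rw [hF]
      _ = T * F * F * F * star T * T := by noncomm_ring

theorem exists_partialIsometry_mem_centralizer_of_trace_eq {p q : Matrix n n 𝕜}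
    (hpA : p ∈ StarSubalgebra.centralizer 𝕜 (A : Set (Matrix n n 𝕜)))
    (hqA : q ∈ StarSubalgebra.centralizer 𝕜 (A : Set (Matrix n n 𝕜)))
    (hp : IsStarProjection p) (hq : IsIdempotentElem q) (hp₀ : p ≠ 0)
    (htr : ∀ a ∈ A, trace (a * p) = trace (a * q)) :
    ∃ v ∈ StarSubalgebra.centralizer 𝕜 (A : Set (Matrix n n 𝕜)),
      v ≠ 0 ∧ v * star v * v = v ∧ q * v = v ∧ v * p = v := by
  obtain ⟨x, hxA, hx⟩ := exists_mem_centralizer_mul_mul_ne_zero hp hp₀ htr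
  obtain ⟨v, hvA, hv₀, hv, ⟨y, hy⟩, z, hz⟩ :=
    exists_partialIsometry_mem_centralizer (mul_mem (mul_mem hqA hxA) hpA) hx
  refine ⟨v, hvA, hv₀, hv, ?_, ?_⟩
  · rw [hy]
    simp only [← Matrix.mul_assoc, hq.eq]
  · rw [hz]
    simp only [Matrix.mul_assoc, hp.isIdempotentElem.eq]

theorem exists_mem_centralizer_star_mul_self_eq {p q : Matrix n n 𝕜}
    (hpA : p ∈ StarSubalgebra.centralizer 𝕜 (A : Set (Matrix n n 𝕜)))
    (hqA : q ∈ StarSubalgebra.centralizer 𝕜 (A : Set (Matrix n n 𝕜)))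
    (hp : IsStarProjection p) (hq : IsStarProjection q)
    (htr : ∀ a ∈ A, trace (a * p) = trace (a * q)) :
    ∃ u ∈ StarSubalgebra.centralizer 𝕜 (A : Set (Matrix n n 𝕜)),
      star u * u = p ∧ u * star u = q := by
  induction hrank : p.rank using Nat.strong_induction_on generalizing p q with | _ r ih
  subst hrank
  rcases eq_or_ne p 0 with rfl | hp₀
  · have htrq : trace q = 0 := by simpa using (htr 1 (one_mem A)).symm
    have hq₀ := eq_zero_of_isIdempotentElem_of_trace_eq_zero hq.isIdempotentElem htrq
    exact ⟨0, zero_mem _, by simp, by simp [hq₀]⟩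
  obtain ⟨v, hvA, hv₀, hv, hqv, hvp⟩ := exists_partialIsometry_mem_centralizer_of_trace_eq
    hpA hqA hp hq.isIdempotentElem hp₀ htr
  obtain ⟨proj_init, proj_final⟩ := isStarProjection_of_mul_star_mul_self hv
  have rank_lt : (p - star v * v).rank < p.rank := by
    refine rank_sub_lt_of_isIdempotentElem proj_init.isIdempotentElem hp.isIdempotentElem
      (proj_init.sub_of_mul_eq_left hp ?_).isIdempotentElem fun h ↦ hv₀ ?_
    · rw [Matrix.mul_assoc, hvp]
    · rw [← hv, Matrix.mul_assoc, h, Matrix.mul_zero]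
  have trace_eq (a : Matrix n n 𝕜) (ha : a ∈ A) :
      trace (a * (p - star v * v)) = trace (a * (q - v * star v)) := by
    rw [Matrix.mul_sub, Matrix.mul_sub, trace_sub, trace_sub, htr a ha, ← Matrix.mul_assoc,
      ← Matrix.mul_assoc, trace_mul_comm _ v, ← Matrix.mul_assoc,
      mem_centralizer_starSubalgebra_iff.1 hvA a ha]
  obtain ⟨u, huA, hup, huq⟩ := ih _ rank_lt
    (sub_mem hpA (mul_mem (star_mem hvA) hvA)) (sub_mem hqA (mul_mem hvA (star_mem hvA)))
    (proj_init.sub_of_mul_eq_left hp (by rw [Matrix.mul_assoc, hvp]))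
    (proj_final.sub_of_mul_eq_right hq (by rw [← Matrix.mul_assoc, hqv])) trace_eq rfl
  have star_u_mul_v : star u * v = 0 := (self_mul_conjTranspose_mul_eq_zero _ _).1 <| by
    rw [← star_eq_conjTranspose, huq, Matrix.sub_mul, hqv, hv, sub_self]
  have v_mul_star_u : v * star u = 0 := (mul_conjTranspose_mul_self_eq_zero _ _).1 <| by
    rw [← star_eq_conjTranspose, hup, Matrix.mul_sub, hvp, ← Matrix.mul_assoc, hv, sub_self]
  refine ⟨u + v, add_mem huA hvA, ?_, ?_⟩
  · have star_v_mul_u : star v * u = 0 := by simpa using congr(star $star_u_mul_v)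
    simp [add_mul, mul_add, hup, star_v_mul_u, star_u_mul_v]
  · have u_mul_star_v : u * star v = 0 := by simpa using congr(star $v_mul_star_u)
    simp [add_mul, mul_add, huq, v_mul_star_u, u_mul_star_v]

end Commutant

section UnitaryRepresentations

theorem toSubmodule_starAlgebra_adjoin_eq_span {R B : Type*} [CommSemiring R] [StarRing R]
    [Semiring B] [StarRing B] [Algebra R B] [StarModule R B] (M : Submonoid B)
    (hM : star (M : Set B) ⊆ M) :
    Subalgebra.toSubmodule (StarAlgebra.adjoin R (M : Set B)).toSubalgebra =
      Submodule.span R M := by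
  rw [StarAlgebra.adjoin_toSubalgebra, Set.union_eq_left.2 hM, Algebra.adjoin_eq_span,
    Submonoid.closure_eq]

variable {𝕜 n G : Type*} [RCLike 𝕜] [Fintype n] [DecidableEq n] [Group G]

/-- The direct sum `ρ ⊕ σ` of two unitary representations, acting by block diagonal matrices. -/
def blockSum (ρ σ : G →* unitaryGroup n 𝕜) : G →* Matrix (n ⊕ n) (n ⊕ n) 𝕜 where
  toFun g := fromBlocks (ρ g) 0 0 (σ g)
  map_one' := by simp
  map_mul' g h := by simp [fromBlocks_multiply]

theorem star_blockSum (ρ σ : G →* unitaryGroup n 𝕜) (g : G) :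
    star (blockSum ρ σ g) = blockSum ρ σ g⁻¹ := by
  simp [blockSum, star_eq_conjTranspose, fromBlocks_conjTranspose]

/-- The star algebra of matrices generated by the direct sum `ρ ⊕ σ`. -/
def blockSumAlgebra (ρ σ : G →* unitaryGroup n 𝕜) :
    StarSubalgebra 𝕜 (Matrix (n ⊕ n) (n ⊕ n) 𝕜) :=
  StarAlgebra.adjoin 𝕜 (MonoidHom.mrange (blockSum ρ σ))

theorem toSubmodule_blockSumAlgebra (ρ σ : G →* unitaryGroup n 𝕜) :
    Subalgebra.toSubmodule (blockSumAlgebra ρ σ).toSubalgebra =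
      Submodule.span 𝕜 (Set.range (blockSum ρ σ)) := by
  refine toSubmodule_starAlgebra_adjoin_eq_span _ ?_
  rintro a ⟨g, hg⟩
  exact ⟨g⁻¹, by rw [← star_blockSum, hg, star_star]⟩

theorem mem_centralizer_blockSumAlgebra_iff {ρ σ : G →* unitaryGroup n 𝕜}
    {z : Matrix (n ⊕ n) (n ⊕ n) 𝕜} :
    z ∈ StarSubalgebra.centralizer 𝕜
        (blockSumAlgebra ρ σ : Set (Matrix (n ⊕ n) (n ⊕ n) 𝕜)) ↔
      ∀ g, blockSum ρ σ g * z = z * blockSum ρ σ g := by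
  refine ⟨fun hz g ↦ ?_, fun hz ↦ mem_centralizer_starSubalgebra_iff.2 fun a ha ↦ ?_⟩
  · exact mem_centralizer_starSubalgebra_iff.1 hz _ (StarAlgebra.subset_adjoin 𝕜 _ ⟨g, rfl⟩)
  · have ha_span : a ∈ Submodule.span 𝕜 (Set.range (blockSum ρ σ)) :=
      toSubmodule_blockSumAlgebra ρ σ ▸ ha
    exact LinearMap.eqOn_span (f := LinearMap.mulRight 𝕜 z) (g := LinearMap.mulLeft 𝕜 z)
      (by rintro _ ⟨g, rfl⟩; exact hz g) ha_span

theorem trace_mul_fromBlocks_eq_of_mem_blockSumAlgebra {ρ σ : G →* unitaryGroup n 𝕜}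
    (htr : ∀ g, trace (ρ g : Matrix n n 𝕜) = trace (σ g : Matrix n n 𝕜))
    {a : Matrix (n ⊕ n) (n ⊕ n) 𝕜} (ha : a ∈ blockSumAlgebra ρ σ) :
    trace (a * fromBlocks 1 0 0 0) = trace (a * fromBlocks 0 0 0 1) := by
  have ha_span : a ∈ Submodule.span 𝕜 (Set.range (blockSum ρ σ)) :=
    toSubmodule_blockSumAlgebra ρ σ ▸ ha
  refine LinearMap.eqOn_span
    (f := traceLinearMap (n ⊕ n) 𝕜 𝕜 ∘ₗ LinearMap.mulRight 𝕜 (fromBlocks 1 0 0 0))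
    (g := traceLinearMap (n ⊕ n) 𝕜 𝕜 ∘ₗ LinearMap.mulRight 𝕜 (fromBlocks 0 0 0 1)) ?_ ha_span
  rintro _ ⟨g, rfl⟩
  simpa [blockSum, fromBlocks_multiply, trace] using htr g

theorem exists_unitary_intertwiner_of_trace_eq {ρ σ : G →* unitaryGroup n 𝕜}
    (htr : ∀ g, trace (ρ g : Matrix n n 𝕜) = trace (σ g : Matrix n n 𝕜)) :
    ∃ U : unitaryGroup n 𝕜, ∀ g, σ g * U = U * ρ g := by
  have hp := isStarProjection_fromBlocks_diagonal (.one (Matrix n n 𝕜)) (.zero (Matrix n n 𝕜))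
  have hq := isStarProjection_fromBlocks_diagonal (.zero (Matrix n n 𝕜)) (.one (Matrix n n 𝕜))
  obtain ⟨u, hu, hup, huq⟩ := exists_mem_centralizer_star_mul_self_eq
    (mem_centralizer_blockSumAlgebra_iff.2 fun g ↦ by simp [blockSum, fromBlocks_multiply])
    (mem_centralizer_blockSumAlgebra_iff.2 fun g ↦ by simp [blockSum, fromBlocks_multiply])
    hp hq fun a ha ↦ trace_mul_fromBlocks_eq_of_mem_blockSumAlgebra htr ha
  have hqu := mul_eq_self_of_mul_star_self_eq hq.isIdempotentElem huq
  have hpu := mul_eq_self_of_mul_star_self_eq (u := star u)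
    hp.isIdempotentElem (by simpa using hup)
  obtain ⟨w, x, U, y, rfl⟩ : ∃ w x U y, u = fromBlocks w x U y :=
    ⟨_, _, _, _, (fromBlocks_toBlocks u).symm⟩
  obtain ⟨rfl, rfl⟩ : w = 0 ∧ x = 0 := by
    simpa [fromBlocks_multiply, fromBlocks_inj, eq_comm] using hqu
  obtain rfl : y = 0 := by
    simpa [star_eq_conjTranspose, fromBlocks_multiply, fromBlocks_conjTranspose, fromBlocks_inj,
      eq_comm] using hpu
  have star_U_mul_U : star U * U = 1 := by
    simpa [star_eq_conjTranspose, fromBlocks_multiply, fromBlocks_conjTranspose,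
      fromBlocks_inj] using hup
  refine ⟨⟨U, mem_unitaryGroup_iff'.2 star_U_mul_U⟩, fun g ↦ Subtype.ext ?_⟩
  simpa [blockSum, fromBlocks_multiply, fromBlocks_inj] using
    mem_centralizer_blockSumAlgebra_iff.1 hu g

end UnitaryRepresentations

section GaugeEquivalence

variable {𝕜 n E V : Type*} [RCLike 𝕜] [Fintype n] [DecidableEq n] {s t : E → V}

theorem exists_gaugeAct_eq_of_trace_holonomy_eq {g g' : E → unitaryGroup n 𝕜}
    (htr : ∀ v l, IsLoopAt s t v l →
      trace (holonomy g l).val = trace (holonomy g' l).val) :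
    ∃ φ : V → unitaryGroup n 𝕜, gaugeAct s t φ g = g' := by
  refine exists_gaugeAct_eq_of_holonomy_conj fun v ↦ ?_
  let H := holonomyGroup s t (fun e ↦ (g e, g' e)) v
  have fst_holonomy (l : List (E × Bool)) :
      (holonomy (fun e ↦ (g e, g' e)) l).1 = holonomy g l :=
        map_holonomy (MonoidHom.fst (unitaryGroup n 𝕜) (unitaryGroup n 𝕜)) (fun e ↦ (g e, g' e)) l
  have snd_holonomy (l : List (E × Bool)) :
      (holonomy (fun e ↦ (g e, g' e)) l).2 = holonomy g' l :=
        map_holonomy (MonoidHom.snd (unitaryGroup n 𝕜) (unitaryGroup n 𝕜)) (fun e ↦ (g e, g' e)) l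
  obtain ⟨U, hU⟩ := exists_unitary_intertwiner_of_trace_eq
    (ρ := (MonoidHom.fst _ _).comp H.subtype) (σ := (MonoidHom.snd _ _).comp H.subtype) <| by
      rintro ⟨_, l, hl, rfl⟩
      rcases eq_or_ne l [] with rfl | hl₀
      · simp [holonomy_nil]
      · simpa [fst_holonomy, snd_holonomy] using htr v l (isLoopAt_iff.2 ⟨hl₀, hl⟩)
  refine ⟨U, fun l hl ↦ ?_⟩
  simpa [fst_holonomy, snd_holonomy] using hU ⟨_, l, hl, rfl⟩

end GaugeEquivalence

section Topology

theorem compactSpace_unitaryGroup (𝕜 n : Type*) [RCLike 𝕜] [Fintype n] [DecidableEq n] :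
    CompactSpace (unitaryGroup n 𝕜) := by
  have compact_box : IsCompact (Set.univ.pi fun _ : n ↦ Set.univ.pi fun _ : n ↦
      Metric.closedBall (0 : 𝕜) 1) :=
    isCompact_univ_pi fun _ ↦ isCompact_univ_pi fun _ ↦ isCompact_closedBall 0 1
  refine isCompact_iff_compactSpace.1 (compact_box.of_isClosed_subset
    (isClosed_unitary (R := Matrix n n 𝕜)) fun M hM i _ j _ ↦ ?_)
  exact mem_closedBall_zero_iff.2 (entry_norm_bound_of_unitary hM i j)

theorem continuous_holonomy {E G : Type*} [Group G] [TopologicalSpace G] [IsTopologicalGroup G]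
    (l : List (E × Bool)) : Continuous fun g : E → G ↦ holonomy g l := by
  refine continuous_list_prod l.reverse fun x _ ↦ ?_
  rcases x with ⟨e, _ | _⟩
  · exact (continuous_apply e).inv
  · exact continuous_apply e

theorem mem_closure_starSubalgebra_of_forall_eq_imp_eq {X 𝕂 : Type*} [TopologicalSpace X]
    [CompactSpace X] [RCLike 𝕂] {A : StarSubalgebra 𝕂 C(X, 𝕂)} {f : C(X, 𝕂)}
    (hf : ∀ x y, (∀ a ∈ A, a x = a y) → f x = f y) : f ∈ closure (A : Set C(X, 𝕂)) := by
  let r : Setoid X :=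
    { r := fun x y ↦ ∀ a ∈ A, a x = a y
      iseqv := ⟨fun _ _ _ ↦ rfl, fun h a ha ↦ (h a ha).symm,
        fun h h' a ha ↦ (h a ha).trans (h' a ha)⟩ }
  let π : C(X, Quotient r) := ⟨Quotient.mk r, continuous_quotient_mk'⟩
  let descend (a : C(X, 𝕂)) (ha : ∀ x y, r x y → a x = a y) : C(Quotient r, 𝕂) :=
    ⟨Quotient.lift a ha, a.continuous.quotient_lift ha⟩
  let B : StarSubalgebra 𝕂 C(Quotient r, 𝕂) := A.comap (ContinuousMap.compStarAlgHom' 𝕂 𝕂 π)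
  have separates : B.SeparatesPoints := by
    rintro ⟨x⟩ ⟨y⟩ hxy
    obtain ⟨a, ha, hne⟩ : ∃ a ∈ A, a x ≠ a y := by
      by_contra! h
      exact hxy (Quotient.sound h)
    exact ⟨_, ⟨descend a fun x y h ↦ h a ha, ha, rfl⟩, hne⟩
  have dense : descend f hf ∈ B.topologicalClosure :=
    ContinuousMap.starSubalgebra_topologicalClosure_eq_top_of_separatesPoints B separates ▸ trivial
  exact map_mem_closure (ContinuousMap.continuous_precomp π) dense fun b hb ↦ hb

end Topology

section WilsonLoops

variable {𝕜 𝕂 n E V : Type*} [RCLike 𝕜] [RCLike 𝕂] [NormedAlgebra 𝕜 𝕂] [Fintype n]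
  [DecidableEq n]

variable (𝕜 𝕂 n) in
/-- The Wilson loop function `g ↦ tr(h_l(g))` of a list of oriented edges on configurations with
values in the unitary group over `𝕜`, as a `𝕂`-valued function. -/
def wilsonLoop (l : List (E × Bool)) : C(E → unitaryGroup n 𝕜, 𝕂) where
  toFun g := algebraMap 𝕜 𝕂 (trace (holonomy g l).val)
  continuous_toFun := (continuous_algebraMap 𝕜 𝕂).comp
    (continuous_subtype_val.comp (continuous_holonomy l)).matrix_trace

theorem star_wilsonLoop [StarModule 𝕜 𝕂] (l : List (E × Bool)) :
    star (wilsonLoop 𝕜 𝕂 n l) = wilsonLoop 𝕜 𝕂 n (reversePath l) := by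
  ext g
  simp [wilsonLoop, holonomy_reversePath, star_eq_conjTranspose, trace_conjTranspose,
    -RCLike.star_def, algebraMap_star_comm]

theorem wilson_loops_dense_orthogonal_general [StarModule 𝕜 𝕂] (s t : E → V)
    (f : C(E → unitaryGroup n 𝕜, 𝕂))
    (hf : ∀ (φ : V → unitaryGroup n 𝕜) (g : E → unitaryGroup n 𝕜), f (gaugeAct s t φ g) = f g) :
    f ∈ closure (Algebra.adjoin 𝕂 {F | ∃ v l, IsLoopAt s t v l ∧ F = wilsonLoop 𝕜 𝕂 n l} :
      Set C(E → unitaryGroup n 𝕜, 𝕂)) := by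
  have := compactSpace_unitaryGroup 𝕜 n
  let W : Set C(E → unitaryGroup n 𝕜, 𝕂) :=
    {F | ∃ v l, IsLoopAt s t v l ∧ F = wilsonLoop 𝕜 𝕂 n l}
  have star_subset : star W ⊆ W := by
    rintro F ⟨v, l, hl, hF⟩
    exact ⟨v, _, hl.reverse, by rw [← star_wilsonLoop, ← hF, star_star]⟩
  have adjoin_eq : (StarAlgebra.adjoin 𝕂 W).toSubalgebra = Algebra.adjoin 𝕂 W := by
    rw [StarAlgebra.adjoin_toSubalgebra, Set.union_eq_left.2 star_subset]
  change f ∈ closure (Algebra.adjoin 𝕂 W : Set C(E → unitaryGroup n 𝕜, 𝕂))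
  rw [← adjoin_eq]
  refine mem_closure_starSubalgebra_of_forall_eq_imp_eq fun g g' hgg' ↦ ?_
  obtain ⟨φ, rfl⟩ : ∃ φ, gaugeAct s t φ g = g' :=
    exists_gaugeAct_eq_of_trace_holonomy_eq fun v l hl ↦
      (algebraMap 𝕜 𝕂).injective (hgg' _ (StarAlgebra.subset_adjoin 𝕂 W ⟨v, l, hl, rfl⟩))
  exact (hf φ g).symm

end WilsonLoops

/-- **Density of Wilson loops for `O(n)` lattice gauge theory.** Every continuous
gauge-invariant function on the configuration space `O(n)^E` of a graph lies in the
uniform closure of the algebra generated by the Wilson loops `g ↦ tr(h_l(g))`. -/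
theorem wilson_loops_dense_orthogonal
    (n : ℕ) (hn : 1 ≤ n)
    {E V : Type} [Fintype E] [Fintype V] (s t : E → V)
    (W : Set C((E → Matrix.orthogonalGroup (Fin n) ℝ), ℂ))
    (hWdef : W = {F | ∃ (v : V) (l : List (E × Bool)), IsLoopAt s t v l ∧
      ∀ g : E → Matrix.orthogonalGroup (Fin n) ℝ,
        F g = ((Matrix.trace ((holonomy g l : Matrix.orthogonalGroup (Fin n) ℝ) :
          Matrix (Fin n) (Fin n) ℝ) : ℝ) : ℂ)})
    (f : C((E → Matrix.orthogonalGroup (Fin n) ℝ), ℂ))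
    (hf : ∀ (φ : V → Matrix.orthogonalGroup (Fin n) ℝ)
      (g : E → Matrix.orthogonalGroup (Fin n) ℝ), f (gaugeAct s t φ g) = f g) :
    f ∈ closure ((Algebra.adjoin ℂ W :
      Subalgebra ℂ C((E → Matrix.orthogonalGroup (Fin n) ℝ), ℂ)) :
      Set C((E → Matrix.orthogonalGroup (Fin n) ℝ), ℂ)) := by
  subst hWdef
  simpa [wilsonLoop, ContinuousMap.ext_iff] using
    wilson_loops_dense_orthogonal_general (𝕜 := ℝ) (𝕂 := ℂ) s t f hf
end
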